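/- Every quantitative multiplayer reachability game with tuples of positive costs on edges has a finite-memory Nash equilibrium. -/

import Mathlib

/-- A quantitative multiplayer reachability game: a finite directed graph whose
vertex set is partitioned among the players (via `owner`), with an initial vertex `v0`,
an edge relation `E` such that every vertex has an outgoing edge, and a goal set
`goal i` for each player `i`. -/
structure ReachGame (P : Type) (V : Type) where
  owner : V → P
  v0 : V
  E : V → V → Prop
  total : ∀ v : V, ∃ w : V, E v w
  goal : P → Set V

namespace ReachGame

variable {P V : Type} [DecidableEq P] (G : ReachGame P V)

/-- The last vertex of a history (with default `v0`). -/
def lastV (h : List V) : V := h.getLastD G.v0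

/-- A history: a nonempty finite path in the graph starting at `v0`. -/
def IsHistory (h : List V) : Prop :=
  h ≠ [] ∧ h.head? = some G.v0 ∧ List.Chain' G.E h

/-- A play: an infinite path starting at `v0`. -/
def IsPlay (ρ : ℕ → V) : Prop :=
  ρ 0 = G.v0 ∧ ∀ k : ℕ, G.E (ρ k) (ρ (k + 1))

/-- `σ` is a (total encoding of a) strategy of player `i`: on every history ending in
a vertex owned by `i` it chooses a successor along an edge. -/
def IsStrategy (i : P) (σ : List V → V) : Prop :=
  ∀ h : List V, G.IsHistory h → G.owner (G.lastV h) = i → G.E (G.lastV h) (σ h)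

/-- A strategy profile: one strategy per player. -/
def IsProfile (prof : P → List V → V) : Prop :=
  ∀ i : P, G.IsStrategy i (prof i)

/-- The history of length `n` (i.e. with `n` edges) obtained by letting the players
follow the profile `prof` from `v0`. -/
def outHist (prof : P → List V → V) : ℕ → List V
  | 0 => [G.v0]
  | n + 1 => outHist prof n ++ [prof (G.owner (G.lastV (outHist prof n))) (outHist prof n)]

/-- The outcome play of the strategy profile `prof`. -/
def outcome (prof : P → List V → V) (n : ℕ) : V :=
  G.lastV (G.outHist prof n)

/-- The cost of player `i` for the play `ρ`: the least `l` with `ρ l ∈ goal i`,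
and `⊤` (`+∞`) if there is no such `l`. -/
noncomputable def cost (i : P) (ρ : ℕ → V) : ℕ∞ :=
  sInf {n : ℕ∞ | ∃ l : ℕ, n = (l : ℕ∞) ∧ ρ l ∈ G.goal i}

/-- Nash equilibrium: no player can strictly decrease his cost by a unilateral
deviation. -/
def IsNash (prof : P → List V → V) : Prop :=
  ∀ (j : P) (σ' : List V → V), G.IsStrategy j σ' →
    G.cost j (G.outcome prof) ≤ G.cost j (G.outcome (Function.update prof j σ'))

/-- `h ≈_σ h'` : the strategy `σ` of player `i` behaves the same after `h` and `h'`,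
i.e. `σ (h ++ δ) = σ (h' ++ δ)` for every suffix `δ` making both `h ++ δ` and
`h' ++ δ` histories ending in a vertex of player `i`. -/
def MemEq (i : P) (σ : List V → V) (h h' : List V) : Prop :=
  ∀ δ : List V,
    G.IsHistory (h ++ δ) → G.owner (G.lastV (h ++ δ)) = i →
    G.IsHistory (h' ++ δ) → G.owner (G.lastV (h' ++ δ)) = i →
    σ (h ++ δ) = σ (h' ++ δ)

/-- A strategy of player `i` is finite-memory if the relation `≈_σ` has finitely many
equivalence classes on histories, i.e. there is a finite set of histories meeting
every class. -/
def FiniteMemory (i : P) (σ : List V → V) : Prop :=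
  ∃ S : Finset (List V), ∀ h : List V, G.IsHistory h →
    ∃ h' ∈ S, G.IsHistory h' ∧ G.MemEq i σ h h'

/-- A profile is finite-memory if each of its strategies is. -/
def FiniteMemoryProfile (prof : P → List V → V) : Prop :=
  ∀ i : P, G.FiniteMemory i (prof i)

/-- `Visit h`: the set of players whose goal set is visited by the finite path `h`. -/
def visitL (h : List V) : Set P := {i : P | ∃ v ∈ h, v ∈ G.goal i}

/-- The type of a strategy profile: the set of players whose goal set is visited by
the outcome. -/
def typeOf (prof : P → List V → V) : Set P :=
  {i : P | ∃ l : ℕ, G.outcome prof l ∈ G.goal i}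

/-! ### The truncated game `G^d` -/

/-- A strategy of player `i` in the truncated game `G^d` : it chooses a successor on
every history with less than `d` edges (list length `≤ d`) ending in a vertex of `i`. -/
def IsStrategyTrunc (d : ℕ) (i : P) (σ : List V → V) : Prop :=
  ∀ h : List V, G.IsHistory h → h.length ≤ d → G.owner (G.lastV h) = i →
    G.E (G.lastV h) (σ h)

/-- A strategy profile of the truncated game `G^d`. -/
def IsProfileTrunc (d : ℕ) (prof : P → List V → V) : Prop :=
  ∀ i : P, G.IsStrategyTrunc d i (prof i)

/-- The cost of player `i` for a finite play `h` (a list of vertices): the least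
position of `h` lying in `goal i`, and `⊤` if `goal i` is not visited. -/
noncomputable def costList (i : P) (h : List V) : ℕ∞ :=
  sInf {n : ℕ∞ | ∃ l : ℕ, n = (l : ℕ∞) ∧ l < h.length ∧ h.getD l G.v0 ∈ G.goal i}

/-- Nash equilibrium of the truncated game `G^d` (whose plays are the histories with
exactly `d` edges). -/
def IsNashTrunc (d : ℕ) (prof : P → List V → V) : Prop :=
  ∀ (j : P) (σ' : List V → V), G.IsStrategyTrunc d j σ' →
    G.costList j (G.outHist prof d) ≤
      G.costList j (G.outHist (Function.update prof j σ') d)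

/-- The type of a strategy profile of the truncated game `G^d`. -/
def typeOfTrunc (d : ℕ) (prof : P → List V → V) : Set P :=
  G.visitL (G.outHist prof d)

end ReachGame

namespace ReachGame

open Classical in
/-- The cost of player `i` for the play `ρ` in the game with cost functions
`c i` on edges: the sum `Σ_{k=1}^{l} c i (ρ_{k-1}, ρ_k)` where `l` is the least
index with `ρ l ∈ F_i`, and `⊤` (`+∞`) if `F_i` is never visited. -/
noncomputable def wCost {P V : Type} (G : ReachGame P V) (c : P → V → V → ℝ)
    (i : P) (ρ : ℕ → V) : WithTop ℝ :=
  if h : ∃ l : ℕ, ρ l ∈ G.goal i ∧ ∀ m : ℕ, m < l → ρ m ∉ G.goal i then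
    ((∑ k ∈ Finset.range h.choose, c i (ρ k) (ρ (k + 1)) : ℝ) : WithTop ℝ)
  else ⊤

end ReachGame

/-!
For each player `j`, let `value j` solve the Bellman equations of the zero-sum game in which `j`
minimises the cost of reaching his goal while all the other players jointly maximise it. As the
graph is finite, both sides have positional optimal moves: `s v` for the owner of `v`, and `t j v`
for the coalition against `j`. Everybody follows `s` until somebody leaves it, at a vertex `u` say;
from then on the owner of `u` is punished with `t`.

Let `j` leave the equilibrium play at `u`. Had he stayed, `value j` would have dropped by at least
the cost of each edge: at his own vertices because `s` is optimal, elsewhere because the value is a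
maximum. Costs being positive and the graph finite, staying thus costs him at most `value j u` from
`u` on. Against `t`, every continuation costs him at least `value j u`. The only memory used is the
vertex of the first deviation and the current vertex.
-/

open scoped ENNReal

namespace ReachGame

section ReachCost

variable {V : Type*}

/-- The total weight of the first `n` edges of the sequence `ρ`. -/
noncomputable def pathWeight (w : V → V → ℝ≥0∞) (ρ : ℕ → V) (n : ℕ) : ℝ≥0∞ :=
  ∑ k ∈ Finset.range n, w (ρ k) (ρ (k + 1))

/-- The weight of `ρ` up to its first visit to `g`, and `⊤` if there is none. Weights being
nonnegative, it is encoded as an infimum over all visits. -/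
noncomputable def reachCost (g : Set V) (w : V → V → ℝ≥0∞) (ρ : ℕ → V) : ℝ≥0∞ :=
  ⨅ (l : ℕ) (_ : ρ l ∈ g), pathWeight w ρ l

variable {g : Set V} {w : V → V → ℝ≥0∞} {ρ π : ℕ → V} {f : V → ℝ≥0∞} {n : ℕ}

lemma pathWeight_succ (w : V → V → ℝ≥0∞) (ρ : ℕ → V) (n : ℕ) :
    pathWeight w ρ (n + 1) = pathWeight w ρ n + w (ρ n) (ρ (n + 1)) :=
  Finset.sum_range_succ _ _

lemma pathWeight_add (w : V → V → ℝ≥0∞) (ρ : ℕ → V) (n l : ℕ) :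
    pathWeight w ρ (n + l) = pathWeight w ρ n + pathWeight w (fun k => ρ (n + k)) l :=
  Finset.sum_range_add _ _ _

lemma pathWeight_mono (w : V → V → ℝ≥0∞) (ρ : ℕ → V) : Monotone (pathWeight w ρ) :=
  fun _ _ hmn => Finset.sum_le_sum_of_subset (Finset.range_mono hmn)

lemma pathWeight_congr (h : ∀ m ≤ n, ρ m = π m) : pathWeight w ρ n = pathWeight w π n :=
  Finset.sum_congr rfl fun k hk => by
    have hkn : k < n := Finset.mem_range.1 hk
    rw [h k hkn.le, h (k + 1) hkn]

lemma reachCost_le_pathWeight (hn : ρ n ∈ g) : reachCost g w ρ ≤ pathWeight w ρ n :=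
  iInf₂_le n hn

lemma reachCost_eq_pathWeight (hn : ρ n ∈ g) (hmin : ∀ m < n, ρ m ∉ g) :
    reachCost g w ρ = pathWeight w ρ n :=
  (reachCost_le_pathWeight hn).antisymm <| le_iInf₂ fun l hl =>
    pathWeight_mono w ρ (not_lt.1 fun hln => hmin l hln hl)

lemma reachCost_eq_top (h : ∀ n, ρ n ∉ g) : reachCost g w ρ = ⊤ :=
  iInf₂_eq_top.2 fun n hn => absurd hn (h n)

lemma reachCost_le_pathWeight_add (g : Set V) (w : V → V → ℝ≥0∞) (ρ : ℕ → V) (n : ℕ) :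
    reachCost g w ρ ≤ pathWeight w ρ n + reachCost g w fun k => ρ (n + k) := by
  simp only [reachCost, ENNReal.add_iInf]
  exact le_iInf₂ fun l hl => pathWeight_add w ρ n l ▸ iInf₂_le (n + l) hl

lemma reachCost_le_reachCost_of_agree (hagree : ∀ m ≤ n, ρ m = π m)
    (htail : reachCost g w (fun k => ρ (n + k)) ≤ reachCost g w fun k => π (n + k)) :
    reachCost g w ρ ≤ reachCost g w π := by
  refine le_iInf₂ fun l hl => ?_
  rcases le_total l n with hln | hnl
  · have hagree' : ∀ m ≤ l, ρ m = π m := fun m hm => hagree m (hm.trans hln)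
    rw [← pathWeight_congr hagree']
    exact reachCost_le_pathWeight (hagree' l le_rfl ▸ hl)
  · obtain ⟨r, rfl⟩ := Nat.exists_eq_add_of_le hnl
    calc reachCost g w ρ
        ≤ pathWeight w ρ n + reachCost g w (fun k => ρ (n + k)) :=
          reachCost_le_pathWeight_add g w ρ n
      _ ≤ pathWeight w π n + reachCost g w (fun k => π (n + k)) := by
          rw [pathWeight_congr hagree]; gcongr
      _ ≤ pathWeight w π n + pathWeight w (fun k => π (n + k)) r := by
          gcongr; exact reachCost_le_pathWeight hl
      _ = pathWeight w π (n + r) := (pathWeight_add w π n r).symm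

lemma le_reachCost_of_le_add (hg : ∀ v ∈ g, f v = 0)
    (hf : ∀ k, f (ρ k) ≤ w (ρ k) (ρ (k + 1)) + f (ρ (k + 1))) :
    f (ρ 0) ≤ reachCost g w ρ := by
  have hprefix (n : ℕ) : f (ρ 0) ≤ pathWeight w ρ n + f (ρ n) := by
    induction n with
    | zero => exact le_add_self
    | succ n ih =>
      rw [pathWeight_succ, add_assoc]
      exact ih.trans (by gcongr; exact hf n)
  refine le_iInf₂ fun l hl => ?_
  simpa only [hg _ hl, add_zero] using hprefix l

lemma pathWeight_add_le (hf : ∀ k < n, w (ρ k) (ρ (k + 1)) + f (ρ (k + 1)) ≤ f (ρ k)) :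
    pathWeight w ρ n + f (ρ n) ≤ f (ρ 0) := by
  induction n with
  | zero => simp [pathWeight]
  | succ n ih =>
    rw [pathWeight_succ, add_assoc]
    exact le_trans (by gcongr; exact hf n n.lt_succ_self)
      (ih fun k hk => hf k (hk.trans n.lt_succ_self))

lemma exists_mem_of_add_le [Finite V] (hw : ∀ k, 0 < w (ρ k) (ρ (k + 1)))
    (hf : ∀ k, ρ k ∉ g → w (ρ k) (ρ (k + 1)) + f (ρ (k + 1)) ≤ f (ρ k)) (h0 : f (ρ 0) ≠ ⊤) :
    ∃ n, ρ n ∈ g := by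
  by_contra! hnot
  have hfin (k : ℕ) : f (ρ k) ≠ ⊤ :=
    ne_top_of_le_ne_top h0 (le_add_self.trans (pathWeight_add_le fun m _ => hf m (hnot m)))
  have hanti : StrictAnti fun k => f (ρ k) := strictAnti_nat_of_succ_lt fun k =>
    calc f (ρ (k + 1))
        < f (ρ (k + 1)) + w (ρ k) (ρ (k + 1)) := ENNReal.lt_add_right (hfin _) (hw k).ne'
      _ = w (ρ k) (ρ (k + 1)) + f (ρ (k + 1)) := add_comm _ _
      _ ≤ f (ρ k) := hf k (hnot k)
  have hinj : Function.Injective ρ := hanti.injective.of_comp (f := f)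
  exact not_injective_infinite_finite ρ hinj

lemma reachCost_le_of_add_le [Finite V] (hw : ∀ k, 0 < w (ρ k) (ρ (k + 1)))
    (hf : ∀ k, ρ k ∉ g → w (ρ k) (ρ (k + 1)) + f (ρ (k + 1)) ≤ f (ρ k)) :
    reachCost g w ρ ≤ f (ρ 0) := by
  classical
  by_cases h0 : f (ρ 0) = ⊤
  · exact h0 ▸ le_top
  · have hhit : ∃ n, ρ n ∈ g := exists_mem_of_add_le hw hf h0
    calc reachCost g w ρ
        ≤ pathWeight w ρ (Nat.find hhit) := reachCost_le_pathWeight (Nat.find_spec hhit)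
      _ ≤ pathWeight w ρ (Nat.find hhit) + f (ρ (Nat.find hhit)) := le_self_add
      _ ≤ f (ρ 0) := pathWeight_add_le fun k hk => hf k (Nat.find_min hhit hk)

end ReachCost

variable {P V : Type} (G : ReachGame P V)

section WCost

variable {G} {c : P → V → V → ℝ} {i : P} {ρ π : ℕ → V}

-- `WithTop.map` applies to `ℝ≥0∞` because that type is by definition `WithTop ℝ≥0`.
lemma wCost_eq_map_reachCost (hc : ∀ k, 0 ≤ c i (ρ k) (ρ (k + 1))) :
    G.wCost c i ρ =
      WithTop.map NNReal.toReal (reachCost (G.goal i) (fun u v => ENNReal.ofReal (c i u v)) ρ) := by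
  classical
  by_cases hhit : ∃ l, ρ l ∈ G.goal i
  · have hfirst : ∃ l, ρ l ∈ G.goal i ∧ ∀ m < l, ρ m ∉ G.goal i :=
      ⟨Nat.find hhit, Nat.find_spec hhit, fun _ => Nat.find_min hhit⟩
    obtain ⟨hgoal, hmin⟩ := hfirst.choose_spec
    rw [wCost, dif_pos hfirst, reachCost_eq_pathWeight hgoal hmin, pathWeight,
      ← ENNReal.ofReal_sum_of_nonneg fun k _ => hc k]
    exact congrArg _ (Real.coe_toNNReal _ (Finset.sum_nonneg fun k _ => hc k)).symm
  · rw [wCost, dif_neg fun ⟨l, hl, _⟩ => hhit ⟨l, hl⟩, reachCost_eq_top fun l hl => hhit ⟨l, hl⟩]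
    rfl

lemma wCost_le_wCost_of_reachCost_le (hρ : ∀ k, 0 ≤ c i (ρ k) (ρ (k + 1)))
    (hπ : ∀ k, 0 ≤ c i (π k) (π (k + 1)))
    (h : reachCost (G.goal i) (fun u v => ENNReal.ofReal (c i u v)) ρ ≤
      reachCost (G.goal i) (fun u v => ENNReal.ofReal (c i u v)) π) :
    G.wCost c i ρ ≤ G.wCost c i π := by
  rw [wCost_eq_map_reachCost hρ, wCost_eq_map_reachCost hπ]
  exact NNReal.coe_mono.withTop_map h

end WCost

section Value

variable (w : P → V → V → ℝ≥0∞) {j : P} {v u : V}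

open Classical in
/-- The Bellman operator of the zero-sum game in which player `j` minimises, and all the other
players jointly maximise, the cost for `j` of reaching his goal. -/
noncomputable def bellman (j : P) : (V → ℝ≥0∞) →o (V → ℝ≥0∞) where
  toFun f v :=
    if v ∈ G.goal j then 0
    else if G.owner v = j then ⨅ u : {u // G.E v u}, (w j v u + f u)
    else ⨆ u : {u // G.E v u}, (w j v u + f u)
  monotone' f f' hf v := by
    dsimp only
    split_ifs
    · exact le_rfl
    · exact iInf_mono fun u => by gcongr; exact hf _
    · exact iSup_mono fun u => by gcongr; exact hf _

/-- The value for player `j` of his zero-sum game against all the other players, as a fixed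
point of the Bellman operator; any other fixed point would serve as well. -/
noncomputable def value (j : P) : V → ℝ≥0∞ := (G.bellman w j).lfp

lemma bellman_value (j : P) (v : V) : G.bellman w j (G.value w j) v = G.value w j v :=
  congrFun (G.bellman w j).map_lfp v

variable {G}

lemma value_of_mem_goal (hv : v ∈ G.goal j) : G.value w j v = 0 :=
  (G.bellman_value w j v).symm.trans (if_pos hv)

lemma value_of_owner_eq (hv : v ∉ G.goal j) (ho : G.owner v = j) :
    G.value w j v = ⨅ u : {u // G.E v u}, (w j v u + G.value w j u) :=
  (G.bellman_value w j v).symm.trans ((if_neg hv).trans (if_pos ho))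

lemma value_of_owner_ne (hv : v ∉ G.goal j) (ho : G.owner v ≠ j) :
    G.value w j v = ⨆ u : {u // G.E v u}, (w j v u + G.value w j u) :=
  (G.bellman_value w j v).symm.trans ((if_neg hv).trans (if_neg ho))

lemma value_le_weight_add_value (ho : G.owner v = j) (hE : G.E v u) :
    G.value w j v ≤ w j v u + G.value w j u := by
  by_cases hv : v ∈ G.goal j
  · exact (value_of_mem_goal w hv).trans_le zero_le
  · rw [value_of_owner_eq w hv ho]
    exact iInf_le (fun u : {u // G.E v u} => w j v u + G.value w j u) ⟨u, hE⟩

lemma weight_add_value_le_value (hv : v ∉ G.goal j) (ho : G.owner v ≠ j) (hE : G.E v u) :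
    w j v u + G.value w j u ≤ G.value w j v := by
  rw [value_of_owner_ne w hv ho]
  exact le_iSup (fun u : {u // G.E v u} => w j v u + G.value w j u) ⟨u, hE⟩

variable (G)

/-- A positional strategy `s`, shared by all players, that plays at every vertex a move realising
the value of its owner. -/
structure IsOptimal (s : V → V) : Prop where
  edge (v : V) : G.E v (s v)
  add_value_le (v : V) (hv : v ∉ G.goal (G.owner v)) :
    w (G.owner v) v (s v) + G.value w (G.owner v) (s v) ≤ G.value w (G.owner v) v

/-- A family `t` of positional strategies, where `t j`, played by everybody but `j`, keeps the cost
of player `j` above his value. -/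
structure IsPunishing (t : P → V → V) : Prop where
  edge (j : P) (v : V) : G.E v (t j v)
  value_le_add (j : P) (v : V) (ho : G.owner v ≠ j) :
    G.value w j v ≤ w j v (t j v) + G.value w j (t j v)

lemma nonempty_successors (v : V) : Nonempty {u // G.E v u} :=
  nonempty_subtype.2 (G.total v)

lemma exists_isOptimal [Finite V] : ∃ s, G.IsOptimal w s := by
  have hmove (v : V) : ∃ u, G.E v u ∧ (v ∉ G.goal (G.owner v) →
      w (G.owner v) v u + G.value w (G.owner v) u ≤ G.value w (G.owner v) v) := by
    have := G.nonempty_successors v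
    obtain ⟨u, hu⟩ := exists_eq_ciInf_of_finite (f := fun u : {u // G.E v u} =>
      w (G.owner v) v u + G.value w (G.owner v) u)
    exact ⟨u, u.2, fun hv => (hu.trans (value_of_owner_eq w hv rfl).symm).le⟩
  choose s hE hs using hmove
  exact ⟨s, hE, hs⟩

lemma exists_isPunishing [Finite V] : ∃ t, G.IsPunishing w t := by
  have hmove (j : P) (v : V) : ∃ u, G.E v u ∧ (G.owner v ≠ j →
      G.value w j v ≤ w j v u + G.value w j u) := by
    have := G.nonempty_successors v
    obtain ⟨u, hu⟩ := exists_eq_ciSup_of_finite (f := fun u : {u // G.E v u} =>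
      w j v u + G.value w j u)
    refine ⟨u, u.2, fun ho => ?_⟩
    by_cases hv : v ∈ G.goal j
    · exact (value_of_mem_goal w hv).trans_le zero_le
    · exact ((value_of_owner_ne w hv ho).trans hu.symm).le
  choose t hE ht using hmove
  exact ⟨t, hE, ht⟩

variable {G w} {ρ : ℕ → V}

lemma IsOptimal.reachCost_le_value [Finite V] {s : V → V} (hs : G.IsOptimal w s)
    (hw : ∀ k, 0 < w j (ρ k) (ρ (k + 1))) (hE : ∀ k, G.E (ρ k) (ρ (k + 1)))
    (hρ : ∀ k, G.owner (ρ k) = j → ρ (k + 1) = s (ρ k)) :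
    reachCost (G.goal j) (w j) ρ ≤ G.value w j (ρ 0) := by
  refine reachCost_le_of_add_le hw fun k hk => ?_
  by_cases ho : G.owner (ρ k) = j
  · subst ho
    rw [hρ k rfl]
    exact hs.add_value_le _ hk
  · exact weight_add_value_le_value w hk ho (hE k)

lemma IsPunishing.value_le_reachCost {t : P → V → V} (ht : G.IsPunishing w t)
    (hE : ∀ k, G.E (ρ k) (ρ (k + 1)))
    (hρ : ∀ k, G.owner (ρ k) ≠ j → ρ (k + 1) = t j (ρ k)) :
    G.value w j (ρ 0) ≤ reachCost (G.goal j) (w j) ρ := by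
  refine le_reachCost_of_le_add (fun v => value_of_mem_goal w) fun k => ?_
  by_cases ho : G.owner (ρ k) = j
  · exact value_le_weight_add_value w ho (hE k)
  · rw [hρ k ho]
    exact ht.value_le_add j _ ho

end Value

section Histories

variable {G} {h : List V} {prof : P → List V → V}

lemma lastV_append (h δ : List V) : G.lastV (h ++ δ) = δ.getLastD (G.lastV h) := by
  cases δ using List.reverseRecOn <;> simp [lastV]

lemma getLast_eq_lastV (hh : h ≠ []) : h.getLast hh = G.lastV h := by
  simp [lastV, List.getLastD_eq_getLast?, List.getLast?_eq_getLast_of_ne_nil hh]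

lemma IsHistory.append_singleton {v : V} (hh : G.IsHistory h) (hv : G.E (G.lastV h) v) :
    G.IsHistory (h ++ [v]) := by
  obtain ⟨hne, hhead, hchain⟩ := hh
  refine ⟨by simp, by simp [hhead], List.isChain_append.2 ⟨hchain, List.isChain_singleton v, ?_⟩⟩
  simpa [List.getLast?_eq_getLast_of_ne_nil hne, getLast_eq_lastV (G := G) hne] using hv

lemma IsProfile.isHistory_outHist (hp : G.IsProfile prof) (n : ℕ) :
    G.IsHistory (G.outHist prof n) := by
  induction n with
  | zero => exact ⟨by simp [outHist], rfl, List.isChain_singleton _⟩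
  | succ n ih => exact ih.append_singleton (hp _ _ ih rfl)

lemma outHist_ne_nil (prof : P → List V → V) (n : ℕ) : G.outHist prof n ≠ [] := by
  cases n <;> simp [outHist]

lemma outcome_succ (prof : P → List V → V) (n : ℕ) :
    G.outcome prof (n + 1) = prof (G.owner (G.outcome prof n)) (G.outHist prof n) := by
  simp [outcome, outHist, lastV]

lemma outHist_succ (prof : P → List V → V) (n : ℕ) :
    G.outHist prof (n + 1) = G.outHist prof n ++ [G.outcome prof (n + 1)] := by
  rw [outcome_succ, outHist, outcome]

lemma IsProfile.edge_outcome (hp : G.IsProfile prof) (n : ℕ) :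
    G.E (G.outcome prof n) (G.outcome prof (n + 1)) := by
  rw [outcome_succ]
  exact hp _ _ (hp.isHistory_outHist n) rfl

lemma IsProfile.update [DecidableEq P] (hp : G.IsProfile prof) {j : P} {σ : List V → V}
    (hσ : G.IsStrategy j σ) : G.IsProfile (Function.update prof j σ) :=
  (Function.forall_update_iff prof G.IsStrategy).2 ⟨hσ, fun i _ => hp i⟩

lemma finiteMemory_of_memEq {Q : Type*} [Finite Q] {i : P} {σ : List V → V} (mem : List V → Q)
    (hmem : ∀ h h', G.IsHistory h → G.IsHistory h' → mem h = mem h' → G.MemEq i σ h h') :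
    G.FiniteMemory i σ := by
  obtain ⟨S, hS, hbij⟩ := Set.exists_subset_bijOn {h | G.IsHistory h} mem
  have hfin : S.Finite := hbij.finite_iff_finite.2 (Set.toFinite _)
  refine ⟨hfin.toFinset, fun h hh => ?_⟩
  obtain ⟨h', hh'S, hmem'⟩ := hbij.surjOn (Set.mem_image_of_mem mem hh)
  exact ⟨h', hfin.mem_toFinset.2 hh'S, hS hh'S, hmem h h' hh (hS hh'S) hmem'.symm⟩

end Histories

section ThreatProfile

variable [DecidableEq V]

/-- The vertex at which a path first takes an edge other than the one prescribed by the positional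
strategy `s`, if it ever does. -/
def firstDeviation (s : V → V) : List V → Option V
  | v :: u :: h => if u = s v then firstDeviation s (u :: h) else some v
  | _ => none

/-- The profile in which all players follow the positional strategy `s` until one of them, `j`,
deviates from it, and play the positional strategy `t j` from then on. It is one and the same
function for every player, each of them using it at his own vertices only. -/
def threatProfile (s : V → V) (t : P → V → V) : P → List V → V := fun _ h =>
  match firstDeviation s h with
  | none => s (G.lastV h)
  | some u => t (G.owner u) (G.lastV h)

variable {G} {s : V → V} {t : P → V → V} {prof : P → List V → V} {n : ℕ}

lemma firstDeviation_append {h : List V} (hh : h ≠ []) (δ : List V) :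
    firstDeviation s (h ++ δ) =
      (firstDeviation s h).or (firstDeviation s (G.lastV h :: δ)) := by
  fun_induction firstDeviation s h with
  | case1 v h ih => simpa [firstDeviation, lastV] using ih (by simp)
  | case2 v u h hu => simp [firstDeviation, hu]
  | case3 h hshort =>
    obtain ⟨v, rfl⟩ : ∃ v, h = [v] := by
      match h, hh with
      | [v], _ => exact ⟨v, rfl⟩
      | v :: u :: h, _ => exact absurd rfl (hshort v u h)
    rfl

lemma firstDeviation_outHist_succ (s : V → V) (prof : P → List V → V) (n : ℕ) :
    firstDeviation s (G.outHist prof (n + 1)) = (firstDeviation s (G.outHist prof n)).or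
      (if G.outcome prof (n + 1) = s (G.outcome prof n) then none
        else some (G.outcome prof n)) := by
  rw [outHist_succ, firstDeviation_append (G := G) (outHist_ne_nil prof n)]
  rfl

lemma firstDeviation_outHist_eq_none
    (hs : ∀ m < n, G.outcome prof (m + 1) = s (G.outcome prof m)) :
    firstDeviation s (G.outHist prof n) = none := by
  induction n with
  | zero => rfl
  | succ n ih =>
    rw [firstDeviation_outHist_succ, ih fun m hm => hs m (hm.trans n.lt_succ_self),
      if_pos (hs n n.lt_succ_self), Option.or_none]

lemma firstDeviation_outHist_eq_some
    (hs : ∀ m < n, G.outcome prof (m + 1) = s (G.outcome prof m))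
    (hn : G.outcome prof (n + 1) ≠ s (G.outcome prof n)) {m : ℕ} (hnm : n < m) :
    firstDeviation s (G.outHist prof m) = some (G.outcome prof n) := by
  induction m, hnm using Nat.le_induction with
  | base =>
    rw [firstDeviation_outHist_succ, firstDeviation_outHist_eq_none hs, if_neg hn, Option.none_or]
  | succ m _ ih => rw [firstDeviation_outHist_succ, ih, Option.some_or]

lemma outcome_succ_of_firstDeviation_eq_none {i : P}
    (hprof : prof (G.owner (G.outcome prof n)) = G.threatProfile s t i)
    (hdev : firstDeviation s (G.outHist prof n) = none) :
    G.outcome prof (n + 1) = s (G.outcome prof n) := by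
  rw [outcome_succ, hprof, threatProfile, hdev, outcome]

lemma outcome_succ_of_firstDeviation_eq_some {i : P} {u : V}
    (hprof : prof (G.owner (G.outcome prof n)) = G.threatProfile s t i)
    (hdev : firstDeviation s (G.outHist prof n) = some u) :
    G.outcome prof (n + 1) = t (G.owner u) (G.outcome prof n) := by
  rw [outcome_succ, hprof, threatProfile, hdev, outcome]

lemma outcome_threatProfile_succ (s : V → V) (t : P → V → V) (n : ℕ) :
    G.outcome (G.threatProfile s t) (n + 1) = s (G.outcome (G.threatProfile s t) n) := by
  induction n using Nat.strong_induction_on with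
  | _ n ih =>
    exact outcome_succ_of_firstDeviation_eq_none (i := G.owner _) rfl
      (firstDeviation_outHist_eq_none ih)

lemma outcome_eq_outcome_threatProfile (t : P → V → V)
    (hs : ∀ m < n, G.outcome prof (m + 1) = s (G.outcome prof m)) :
    G.outcome prof n = G.outcome (G.threatProfile s t) n := by
  induction n with
  | zero => rfl
  | succ n ih =>
    rw [hs n n.lt_succ_self, outcome_threatProfile_succ,
      ih fun m hm => hs m (hm.trans n.lt_succ_self)]

lemma outcome_eq_or_exists_deviation {j : P} (hprof : ∀ i ≠ j, prof i = G.threatProfile s t i) :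
    G.outcome prof = G.outcome (G.threatProfile s t) ∨
      ∃ n, (∀ m ≤ n, G.outcome (G.threatProfile s t) m = G.outcome prof m) ∧
        ∀ m ≥ n, G.owner (G.outcome prof m) ≠ j →
          G.outcome prof (m + 1) = t j (G.outcome prof m) := by
  by_cases hs : ∀ n, G.outcome prof (n + 1) = s (G.outcome prof n)
  · exact .inl (funext fun n => outcome_eq_outcome_threatProfile t fun m _ => hs m)
  · push Not at hs
    let n := Nat.find hs
    have hdev : G.outcome prof (n + 1) ≠ s (G.outcome prof n) := Nat.find_spec hs
    have hbefore (m : ℕ) (hm : m < n) : G.outcome prof (m + 1) = s (G.outcome prof m) :=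
      not_not.1 (Nat.find_min hs hm)
    have howner : G.owner (G.outcome prof n) = j := by
      by_contra ho
      exact hdev (outcome_succ_of_firstDeviation_eq_none (hprof _ ho)
        (firstDeviation_outHist_eq_none hbefore))
    refine .inr ⟨n, fun m hm => (outcome_eq_outcome_threatProfile t fun k hk =>
      hbefore k (hk.trans_le hm)).symm, fun m hm ho => ?_⟩
    have hnm : n < m := hm.lt_of_ne fun hnm => ho (hnm ▸ howner)
    rw [outcome_succ_of_firstDeviation_eq_some (hprof _ ho)
      (firstDeviation_outHist_eq_some hbefore hdev hnm), howner]

lemma isProfile_threatProfile (hs : ∀ v, G.E v (s v)) (ht : ∀ j v, G.E v (t j v)) :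
    G.IsProfile (G.threatProfile s t) := by
  intro i h _ _
  rw [threatProfile]
  split
  · exact hs _
  · exact ht _ _

lemma finiteMemoryProfile_threatProfile [Finite V] (s : V → V) (t : P → V → V) :
    G.FiniteMemoryProfile (G.threatProfile s t) := by
  refine fun i => finiteMemory_of_memEq (fun h => (firstDeviation s h, G.lastV h)) ?_
  intro h h' hh hh' hmem δ _ _ _ _
  obtain ⟨hdev, hlast⟩ := Prod.ext_iff.1 hmem
  dsimp only at hdev hlast
  simp only [threatProfile, firstDeviation_append (G := G) hh.1,
    firstDeviation_append (G := G) hh'.1, lastV_append, hdev, hlast]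

lemma reachCost_threatProfile_le [Finite V] {w : P → V → V → ℝ≥0∞} {j : P}
    (hw : ∀ v u, G.E v u → 0 < w j v u) (hs : G.IsOptimal w s) (ht : G.IsPunishing w t)
    (hp : G.IsProfile prof) (hprof : ∀ i ≠ j, prof i = G.threatProfile s t i) :
    reachCost (G.goal j) (w j) (G.outcome (G.threatProfile s t)) ≤
      reachCost (G.goal j) (w j) (G.outcome prof) := by
  have hE := (isProfile_threatProfile hs.edge ht.edge).edge_outcome
  rcases outcome_eq_or_exists_deviation hprof with heq | ⟨n, hagree, hpunish⟩
  · rw [heq]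
  · refine reachCost_le_reachCost_of_agree hagree ?_
    calc reachCost (G.goal j) (w j) (fun k => G.outcome (G.threatProfile s t) (n + k))
        ≤ G.value w j (G.outcome (G.threatProfile s t) n) :=
          hs.reachCost_le_value (fun k => hw _ _ (hE (n + k))) (fun k => hE (n + k))
            fun k _ => outcome_threatProfile_succ s t (n + k)
      _ = G.value w j (G.outcome prof n) := by rw [hagree n le_rfl]
      _ ≤ reachCost (G.goal j) (w j) (fun k => G.outcome prof (n + k)) :=
          ht.value_le_reachCost (fun k => hp.edge_outcome (n + k))
            fun k => hpunish (n + k) (Nat.le_add_right n k)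

end ThreatProfile

end ReachGame

open ReachGame in
theorem exists_finiteMemory_nash_weighted_general {P V : Type} [DecidableEq P] [Finite V]
    (G : ReachGame P V) (c : P → V → V → ℝ)
    (hc : ∀ (i : P) (v w : V), G.E v w → 0 < c i v w) :
    ∃ prof : P → List V → V,
      G.IsProfile prof ∧ G.FiniteMemoryProfile prof ∧
      ∀ (j : P) (σ' : List V → V), G.IsStrategy j σ' →
        G.wCost c j (G.outcome prof) ≤
          G.wCost c j (G.outcome (Function.update prof j σ')) := by
  classical
  let w (i : P) (u v : V) : ℝ≥0∞ := ENNReal.ofReal (c i u v)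
  obtain ⟨s, hs⟩ := G.exists_isOptimal w
  obtain ⟨t, ht⟩ := G.exists_isPunishing w
  have hp : G.IsProfile (G.threatProfile s t) := isProfile_threatProfile hs.edge ht.edge
  refine ⟨G.threatProfile s t, hp, finiteMemoryProfile_threatProfile s t, fun j σ' hσ' => ?_⟩
  have hp' : G.IsProfile (Function.update (G.threatProfile s t) j σ') := hp.update hσ'
  have hcost := reachCost_threatProfile_le (fun v u hE => ENNReal.ofReal_pos.2 (hc j v u hE))
    hs ht hp' fun i hij => Function.update_of_ne hij _ _
  exact wCost_le_wCost_of_reachCost_le (fun k => (hc _ _ _ (hp.edge_outcome k)).le)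
    (fun k => (hc _ _ _ (hp'.edge_outcome k)).le) hcost

/-- Every quantitative multiplayer reachability game with tuples of
positive costs on edges has a finite-memory Nash equilibrium. -/
theorem exists_finiteMemory_nash_weighted {P V : Type} [Fintype P] [DecidableEq P]
    [Fintype V] (G : ReachGame P V)
    (c : P → V → V → ℝ) (hc : ∀ (i : P) (v w : V), G.E v w → 0 < c i v w) :
    ∃ prof : P → List V → V,
      G.IsProfile prof ∧ G.FiniteMemoryProfile prof ∧
      ∀ (j : P) (σ' : List V → V), G.IsStrategy j σ' →
        G.wCost c j (G.outcome prof) ≤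
          G.wCost c j (G.outcome (Function.update prof j σ')) :=
  exists_finiteMemory_nash_weighted_general G c hc
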